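/- arXiv:2106.11862 — 2 statements merged into one kernel-verified Lean document; each statement's English description precedes it below -/
import Mathlib

section
/- Let μ : ℝ → ℝ be a nonnegative, even (μ(x) = μ(−x)), integrable function with ∫_ℝ μ(x) dx = 1, such that μ is continuous at 0 and x ↦ x²·μ(x) is integrable. For η > 0 define the suboptimality Sub(η) = ∫_ℝ (x−1)²·μ(x)/(1+e^{−4ηx}) dx + ∫_ℝ (x+1)²·μ(x)/(1+e^{4ηx}) dx − ∫_ℝ (|x|−1)²·μ(x) dx. Then lim_{η→∞} η²·Sub(η) = π²·μ(0)/24. -/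
open MeasureTheory Filter

/-!
Given `x`, the entropic coupling picks the farther of the two atoms with probability `σ (-4η|x|)`,
where `σ` is the sigmoid, and this costs `(|x| + 1)² - (|x| - 1)² = 4|x|` more than the nearer one.
Hence `Sub(η) = ∫ 4|x| σ (-4η|x|) μ(x) dx`, and `η² Sub(η)` is the integral of `μ` against `η φ(ηx)`
with `φ(x) = 4|x| σ (-4|x|)`, an approximate identity of mass `∫ φ`. Expanding
`σ (-t) = ∑ (-1)ⁿ e^{-(n+1)t}` shows that the Mellin transform of `σ (-t)` at `s` is
`Γ(s) (1 - 2^{1-s}) ζ(s)`; its value `ζ(2)/2 = π²/12` at `s = 2` gives `∫ φ = π²/24`.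
-/

section Sigmoid

open Real (sigmoid)

lemma sigmoid_neg_le_exp_neg (t : ℝ) : sigmoid (-t) ≤ Real.exp (-t) := by
  rw [← Real.sigmoid_mul_rexp_neg]
  exact mul_le_of_le_one_left (Real.exp_pos _).le (Real.sigmoid_le_one t)

lemma hasSum_neg_one_pow_mul_exp_sigmoid_neg {t : ℝ} (ht : 0 < t) :
    HasSum (fun n : ℕ ↦ (-1) ^ n * Real.exp (-(n + 1) * t)) (sigmoid (-t)) := by
  have hratio : |-Real.exp (-t)| < 1 := by simpa using ht
  have hgeom := (hasSum_geometric_of_abs_lt_one hratio).mul_left (Real.exp (-t))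
  rw [sub_neg_eq_add, ← Real.sigmoid_def, mul_comm, Real.sigmoid_mul_rexp_neg] at hgeom
  refine hgeom.congr_fun fun n ↦ ?_
  rw [neg_pow (Real.exp _), ← Real.exp_nat_mul, mul_left_comm, ← Real.exp_add]
  ring_nf

lemma hasSum_neg_one_pow_div_nat_add_one_cpow {s : ℂ} (hs : 1 < s.re) :
    HasSum (fun n : ℕ ↦ (-1) ^ n / (n + 1 : ℂ) ^ s) ((1 - 2 ^ (1 - s)) * riemannZeta s) := by
  have hsummable : Summable fun n : ℕ ↦ 1 / (n + 1 : ℂ) ^ s := by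
    simpa using (summable_nat_add_iff 1).mpr (Complex.summable_one_div_nat_cpow.mpr hs)
  have hzeta : HasSum (fun n : ℕ ↦ 1 / (n + 1 : ℂ) ^ s) (riemannZeta s) := by
    rw [zeta_eq_tsum_one_div_nat_add_one_cpow hs]
    exact hsummable.hasSum
  have hodd : HasSum (fun k : ℕ ↦ 1 / ((2 * k + 1 : ℕ) + 1 : ℂ) ^ s)
      (2 ^ (-s) * riemannZeta s) := by
    refine (hzeta.mul_left _).congr_fun fun k ↦ ?_
    have hfactor : ((2 * k + 1 : ℕ) + 1 : ℂ) = (2 : ℕ) * (k + 1 : ℕ) := by push_cast; ring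
    rw [hfactor, Complex.natCast_mul_natCast_cpow, Complex.cpow_neg]
    push_cast
    rw [one_div, mul_inv, one_div]
  obtain ⟨m, heven⟩ : Summable fun k : ℕ ↦ 1 / ((2 * k : ℕ) + 1 : ℂ) ^ s :=
    hsummable.comp_injective (i := fun k : ℕ ↦ 2 * k) fun _ _ h ↦ by simpa using h
  have hsplit : m + 2 ^ (-s) * riemannZeta s = riemannZeta s :=
    (HasSum.even_add_odd (f := fun n : ℕ ↦ 1 / (n + 1 : ℂ) ^ s) heven hodd).unique hzeta
  have halternating : HasSum (fun n : ℕ ↦ (-1) ^ n / (n + 1 : ℂ) ^ s)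
      (m + -(2 ^ (-s) * riemannZeta s)) :=
    HasSum.even_add_odd (by simpa using heven) (by simpa [pow_succ, neg_div] using hodd.neg)
  convert halternating using 1
  rw [Complex.cpow_sub _ _ two_ne_zero, Complex.cpow_one, div_eq_mul_inv, ← Complex.cpow_neg]
  linear_combination -hsplit

lemma mellin_sigmoid_neg {s : ℂ} (hs : 1 < s.re) :
    mellin (fun t ↦ (sigmoid (-t) : ℂ)) s =
      Complex.Gamma s * ((1 - 2 ^ (1 - s)) * riemannZeta s) := by
  have hseries : ∀ t ∈ Set.Ioi (0 : ℝ),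
      HasSum (fun n : ℕ ↦ (-1 : ℂ) ^ n * Real.exp (-(n + 1 : ℝ) * t)) (sigmoid (-t) : ℂ) :=
    fun t ht ↦ by exact_mod_cast hasSum_neg_one_pow_mul_exp_sigmoid_neg ht
  have hsummable : Summable fun n : ℕ ↦ ‖(-1 : ℂ) ^ n‖ / (n + 1 : ℝ) ^ s.re := by
    simpa using (summable_nat_add_iff 1).mpr (Real.summable_one_div_nat_rpow.mpr hs)
  refine (hasSum_mellin (fun n ↦ .inr (by positivity)) (by linarith) hseries hsummable).unique ?_
  exact ((hasSum_neg_one_pow_div_nat_add_one_cpow hs).mul_left _).congr_fun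
    fun n ↦ by push_cast; rw [mul_div_assoc]

lemma integral_Ioi_mul_sigmoid_neg :
    ∫ t in Set.Ioi (0 : ℝ), t * sigmoid (-t) = Real.pi ^ 2 / 12 := by
  have hmellin : mellin (fun t ↦ (sigmoid (-t) : ℂ)) 2 = Real.pi ^ 2 / 12 := by
    have hGamma : Complex.Gamma 2 = 1 := by simp [Complex.Gamma_ofNat_eq_factorial]
    have hpow : (2 : ℂ) ^ (1 - 2 : ℂ) = 1 / 2 := by
      rw [show (1 - 2 : ℂ) = -1 by norm_num, Complex.cpow_neg_one, one_div]
    rw [mellin_sigmoid_neg (by norm_num), riemannZeta_two, hGamma, hpow]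
    ring
  rw [mellin, show (2 : ℂ) - 1 = 1 by norm_num] at hmellin
  simp only [Complex.cpow_one, smul_eq_mul, ← Complex.ofReal_mul, integral_complex_ofReal]
    at hmellin
  exact_mod_cast hmellin

end Sigmoid

section Integration

variable {E : Type*} [NormedAddCommGroup E] [NormedSpace ℝ E]

lemma integrable_smul_of_norm_le_one_add_norm {α : Type*} [MeasurableSpace α] {ν : Measure α}
    {f : α → E} {g w : α → ℝ} {C : ℝ} (hf : Integrable f ν)
    (hgf : Integrable (fun x ↦ g x • f x) ν) (hw : AEStronglyMeasurable w ν)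
    (hwg : ∀ x, ‖w x‖ ≤ C * (1 + ‖g x‖)) : Integrable (fun x ↦ w x • f x) ν := by
  refine ((hf.norm.add hgf.norm).const_mul C).mono' (hw.smul hf.1) (.of_forall fun x ↦ ?_)
  calc ‖w x • f x‖ = ‖w x‖ * ‖f x‖ := norm_smul _ _
    _ ≤ C * (1 + ‖g x‖) * ‖f x‖ := by gcongr; exact hwg x
    _ = C * (‖f x‖ + ‖g x • f x‖) := by rw [norm_smul]; ring

lemma tendsto_integral_comp_smul_smul_of_integral_pos [CompleteSpace E] {F : Type*}
    [NormedAddCommGroup F] [NormedSpace ℝ F] [FiniteDimensional ℝ F] [MeasurableSpace F]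
    [BorelSpace F] {ν : Measure F} [ν.IsAddHaarMeasure] {φ : F → ℝ} (hφ : ∀ x, 0 ≤ φ x)
    (hφ_pos : 0 < ∫ x, φ x ∂ν)
    (hφ_decay : Tendsto (fun x ↦ ‖x‖ ^ Module.finrank ℝ F * φ x) (Bornology.cobounded F) (nhds 0))
    {g : F → E} (hg : Integrable g ν) (hg_cont : ContinuousAt g 0) :
    Tendsto (fun c : ℝ ↦ ∫ x, (c ^ Module.finrank ℝ F * φ (c • x)) • g x ∂ν) atTop
      (nhds ((∫ x, φ x ∂ν) • g 0)) := by
  set I := ∫ x, φ x ∂ν with hI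
  have hdecay : Tendsto (fun x ↦ ‖x‖ ^ Module.finrank ℝ F * (I⁻¹ * φ x))
      (Bornology.cobounded F) (nhds 0) := by
    simpa [mul_left_comm] using hφ_decay.const_mul I⁻¹
  have hmass : ∫ x, I⁻¹ * φ x ∂ν = 1 := by
    rw [integral_const_mul, ← hI, inv_mul_cancel₀ hφ_pos.ne']
  have hnormalized := tendsto_integral_comp_smul_smul_of_integrable
    (fun x ↦ mul_nonneg (inv_nonneg.mpr hφ_pos.le) (hφ x)) hmass hdecay hg hg_cont
  refine (hnormalized.const_smul I).congr fun c ↦ ?_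
  rw [← integral_smul]
  congr 1 with x
  rw [smul_smul, mul_left_comm I, mul_inv_cancel_left₀ hφ_pos.ne']

end Integration

section ExcessKernel

/-- The kernel `φ` of the approximate identity: the expected extra cost, at `η = 1`, of
sending `x` at random to one of the atoms `±1` rather than to the nearer one. -/
noncomputable def excessKernel (x : ℝ) : ℝ := 4 * |x| * Real.sigmoid (-(4 * |x|))

lemma excessKernel_nonneg (x : ℝ) : 0 ≤ excessKernel x :=
  mul_nonneg (by positivity) (Real.sigmoid_nonneg _)

lemma integral_excessKernel : ∫ x, excessKernel x = Real.pi ^ 2 / 24 := by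
  calc ∫ x, excessKernel x
      = 2 * ∫ t in Set.Ioi (0 : ℝ), 4 * t * Real.sigmoid (-(4 * t)) :=
        integral_comp_abs (f := fun t ↦ 4 * t * Real.sigmoid (-(4 * t)))
    _ = 2 * (4⁻¹ * ∫ t in Set.Ioi (0 : ℝ), t * Real.sigmoid (-t)) := by
        rw [integral_comp_mul_left_Ioi (fun t ↦ t * Real.sigmoid (-t)) 0 four_pos, mul_zero,
          smul_eq_mul]
    _ = Real.pi ^ 2 / 24 := by rw [integral_Ioi_mul_sigmoid_neg]; ring

lemma tendsto_norm_mul_excessKernel_cobounded :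
    Tendsto (fun x ↦ ‖x‖ * excessKernel x) (Bornology.cobounded ℝ) (nhds 0) := by
  have hbound (x : ℝ) : ‖x‖ * excessKernel x ≤ 4 * (‖x‖ ^ 2 * Real.exp (-‖x‖)) := by
    have hexp : Real.sigmoid (-(4 * |x|)) ≤ Real.exp (-|x|) :=
      (sigmoid_neg_le_exp_neg _).trans (Real.exp_le_exp.mpr (by linarith [abs_nonneg x]))
    calc ‖x‖ * excessKernel x ≤ |x| * (4 * |x| * Real.exp (-|x|)) := by
          rw [Real.norm_eq_abs, excessKernel]; gcongr
      _ = 4 * (‖x‖ ^ 2 * Real.exp (-‖x‖)) := by rw [Real.norm_eq_abs]; ring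
  refine squeeze_zero (fun x ↦ mul_nonneg (norm_nonneg x) (excessKernel_nonneg x)) hbound ?_
  simpa using ((Real.tendsto_pow_mul_exp_neg_atTop_nhds_zero 2).comp
    (tendsto_norm_cobounded_atTop (E := ℝ))).const_mul 4

lemma mul_excessKernel_mul {η : ℝ} (hη : 0 ≤ η) (x : ℝ) :
    η * excessKernel (η * x) = η ^ 2 * (4 * |x| * Real.sigmoid (-(4 * η * |x|))) := by
  rw [excessKernel, abs_mul, abs_of_nonneg hη, ← mul_assoc 4 η]
  ring

end ExcessKernel

section Suboptimality

variable {E : Type*} [NormedAddCommGroup E] [NormedSpace ℝ E]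

/-- The suboptimality `Sub(η)`: the quadratic transport cost from `μ` to the atoms `±1` of the
coupling that sends `x` to `1` with probability `σ (4ηx)` and to `-1` with probability `σ (-4ηx)`,
minus the cost of sending `x` to the nearer atom. The density `μ` may take values in any real
normed space. -/
noncomputable def suboptimality (μ : ℝ → E) (η : ℝ) : E :=
  (∫ x, ((x - 1) ^ 2 * Real.sigmoid (4 * η * x)) • μ x) +
    (∫ x, ((x + 1) ^ 2 * Real.sigmoid (-(4 * η * x))) • μ x) -
    ∫ x, (|x| - 1) ^ 2 • μ x

lemma expected_cost_sub_min_cost (η x : ℝ) :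
    (x - 1) ^ 2 * Real.sigmoid (4 * η * x) + (x + 1) ^ 2 * Real.sigmoid (-(4 * η * x))
      - (|x| - 1) ^ 2 = 4 * |x| * Real.sigmoid (-(4 * η * |x|)) := by
  rcases abs_cases x with ⟨habs, -⟩ | ⟨habs, -⟩
  · rw [habs, Real.sigmoid_neg]
    ring
  · rw [habs, mul_neg (4 * η), neg_neg, Real.sigmoid_neg]
    ring

lemma suboptimality_eq_integral {μ : ℝ → E} (hint : Integrable μ)
    (hx2 : Integrable fun x ↦ x ^ 2 • μ x) (η : ℝ) :
    suboptimality μ η = ∫ x, (4 * |x| * Real.sigmoid (-(4 * η * |x|))) • μ x := by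
  have hquadratic {p : ℝ → ℝ} (hp : Continuous p) (hp_le : ∀ x, |p x| ≤ 2 * (1 + x ^ 2)) :
      Integrable fun x ↦ p x • μ x :=
    integrable_smul_of_norm_le_one_add_norm hint hx2 hp.aestronglyMeasurable (by simpa using hp_le)
  have hcost {p q : ℝ → ℝ} (hp : Continuous p) (hq : Continuous q) (hp_nonneg : ∀ x, 0 ≤ p x)
      (hp_le : ∀ x, p x ≤ 2 * (1 + x ^ 2)) :
      Integrable fun x ↦ (p x * Real.sigmoid (q x)) • μ x := by
    refine hquadratic (by fun_prop) fun x ↦ ?_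
    rw [abs_of_nonneg (mul_nonneg (hp_nonneg x) (Real.sigmoid_nonneg _))]
    exact (mul_le_of_le_one_right (hp_nonneg x) (Real.sigmoid_le_one _)).trans (hp_le x)
  have hright : Integrable fun x ↦ ((x - 1) ^ 2 * Real.sigmoid (4 * η * x)) • μ x :=
    hcost (by fun_prop) (by fun_prop) (fun x ↦ sq_nonneg _) fun x ↦ by
      nlinarith [sq_nonneg (x + 1)]
  have hleft : Integrable fun x ↦ ((x + 1) ^ 2 * Real.sigmoid (-(4 * η * x))) • μ x :=
    hcost (by fun_prop) (by fun_prop) (fun x ↦ sq_nonneg _) fun x ↦ by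
      nlinarith [sq_nonneg (x - 1)]
  have hnearest : Integrable fun x ↦ (|x| - 1) ^ 2 • μ x :=
    hquadratic (by fun_prop) fun x ↦ by
      rw [abs_sq]
      nlinarith [sq_nonneg (|x| + 1), sq_abs x]
  rw [suboptimality, ← integral_add hright hleft,
    ← integral_sub (by exact hright.add hleft) hnearest]
  simp only [← add_smul, ← sub_smul, expected_cost_sub_min_cost]

theorem suboptimality_quadratic_limit_general [CompleteSpace E] {μ : ℝ → E} (hint : Integrable μ)
    (hcont : ContinuousAt μ 0) (hx2 : Integrable fun x ↦ x ^ 2 • μ x) :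
    Tendsto (fun η : ℝ ↦ η ^ 2 • suboptimality μ η) atTop (nhds ((Real.pi ^ 2 / 24) • μ 0)) := by
  have hlimit : Tendsto (fun η : ℝ ↦ ∫ x, (η * excessKernel (η * x)) • μ x) atTop
      (nhds ((Real.pi ^ 2 / 24) • μ 0)) := by
    have hmass : 0 < ∫ x, excessKernel x := by
      rw [integral_excessKernel]
      positivity
    simpa [integral_excessKernel] using tendsto_integral_comp_smul_smul_of_integral_pos
      excessKernel_nonneg hmass (by simpa using tendsto_norm_mul_excessKernel_cobounded) hint hcont
  refine hlimit.congr' ?_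
  filter_upwards [eventually_ge_atTop 0] with η hη
  rw [suboptimality_eq_integral hint hx2, ← integral_smul]
  simp only [mul_excessKernel_mul hη, smul_smul]

end Suboptimality

theorem suboptimality_quadratic_limit (μ : ℝ → ℝ)
    (hnn : ∀ x, 0 ≤ μ x)
    (heven : ∀ x, μ x = μ (-x))
    (hint : Integrable μ)
    (hprob : ∫ x, μ x = 1)
    (hcont : ContinuousAt μ 0)
    (hx2 : Integrable (fun x => x ^ 2 * μ x)) :
    Tendsto (fun η : ℝ => η ^ 2 *
        ((∫ x, (x - 1) ^ 2 * μ x / (1 + Real.exp (-(4 * η * x)))) +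
          (∫ x, (x + 1) ^ 2 * μ x / (1 + Real.exp (4 * η * x))) -
          ∫ x, (|x| - 1) ^ 2 * μ x))
      atTop (nhds (Real.pi ^ 2 * μ 0 / 24)) := by
  simpa [suboptimality, Real.sigmoid_def, div_eq_mul_inv, mul_right_comm] using
    suboptimality_quadratic_limit_general hint hcont hx2
end

section
/- Let μ be a probability measure on ℝ with an even density μ(·) (with respect to Lebesgue measure) and finite second moment, let ν = (1/2)δ_{−1} + (1/2)δ_{+1}, and fix η > 0. Define the probability measure π_η on ℝ × ℝ supported on ℝ × {−1, 1} by π_η(A × {y}) = ∫_A μ(x)·e^{−η(x−y)²}/(e^{−η(x−1)²}+e^{−η(x+1)²}) dx for y ∈ {−1, 1} and Borel A ⊆ ℝ. Then π_η is a coupling of μ and ν (its first marginal is μ and its second marginal is ν), and for every coupling π of μ and ν, ∫ (x−y)² dπ_η + (1/η)·KL(π_η ‖ μ ⊗ ν) ≤ ∫ (x−y)² dπ + (1/η)·KL(π ‖ μ ⊗ ν), where KL denotes the Kullback–Leibler divergence and μ ⊗ ν is the product measure. -/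
open MeasureTheory ENNReal Classical

/-- Kullback–Leibler divergence: `∫ log (dπ/dρ) dπ` when `π ≪ ρ` (and the
log-likelihood ratio is integrable, which for probability measures is the
condition for finiteness), and `+∞` otherwise. -/

noncomputable def KLdiv (π ρ : Measure (ℝ × ℝ)) : ℝ≥0∞ :=
  if π ≪ ρ ∧ Integrable (llr π ρ) π then ENNReal.ofReal (∫ z, llr π ρ z ∂π)
  else ⊤

/-- The discrete measure `ν = (1/2) δ_{-1} + (1/2) δ_{+1}`. -/
noncomputable def nuHalf : Measure ℝ :=
  (1 / 2 : ℝ≥0∞) • Measure.dirac (-1) + (1 / 2 : ℝ≥0∞) • Measure.dirac 1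

/-- The entropically regularized coupling `π_η` in the symmetric one-dimensional
semi-discrete case: supported on `ℝ × {−1, 1}`, with
`π_η(A × {y}) = ∫_A μ(x) e^{−η(x−y)²}/(e^{−η(x−1)²}+e^{−η(x+1)²}) dx`. -/
noncomputable def piEta (μ : ℝ → ℝ) (η : ℝ) : Measure (ℝ × ℝ) :=
  Measure.map (fun x => (x, (1 : ℝ)))
    (volume.withDensity fun x => ENNReal.ofReal
      (μ x * Real.exp (-(η * (x - 1) ^ 2)) /
        (Real.exp (-(η * (x - 1) ^ 2)) + Real.exp (-(η * (x + 1) ^ 2))))) +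
  Measure.map (fun x => (x, (-1 : ℝ)))
    (volume.withDensity fun x => ENNReal.ofReal
      (μ x * Real.exp (-(η * (x + 1) ^ 2)) /
        (Real.exp (-(η * (x - 1) ^ 2)) + Real.exp (-(η * (x + 1) ^ 2)))))

/-!
With `M` the first marginal and `ν` the second, `π_η` has density `exp (η (a(x) − (x − y)²))`
relative to `M ⊗ ν`, for a function `a` of `x` alone. By the Gibbs variational principle,
`KL(π ‖ ρ) ≥ ∫ f dπ − log ∫ exp f dρ`, with equality when `π` is the exponential tilt of `ρ` by `f`.
For `f = η (a − (x − y)²)` this bounds the regularized cost of `π` from below by a quantity that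
depends on `π` only through `∫ a dπ`, hence only through its first marginal, and `π_η` attains the
bound. If the second moment of `M` is infinite, every coupling with `ν` has infinite cost.

The second marginal of `π_η` is `ν` because `(x, y) ↦ (−x, −y)` preserves `π_η` when `M` is even.
-/

open InformationTheory

section GibbsVariationalPrinciple

variable {Ω : Type*} [MeasurableSpace Ω]

/-- Entropically regularized cost of `π` for the cost function `c`, the regularization strength `ε`
and the reference measure `ρ`. Being extended-valued, it cuts off the negative part of `c`. -/
noncomputable def entropicCost (c : Ω → ℝ) (ε : ℝ) (ρ π : Measure Ω) : ℝ≥0∞ :=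
  ∫⁻ ω, ENNReal.ofReal (c ω) ∂π + ENNReal.ofReal ε * klDiv π ρ

lemma entropicCost_eq_top_of_not_integrable {c : Ω → ℝ} (hc : Measurable c) (hc₀ : 0 ≤ c)
    {π : Measure Ω} (hcπ : ¬ Integrable c π) (ε : ℝ) (ρ : Measure Ω) :
    entropicCost c ε ρ π = ∞ := by
  have hcost : ∫⁻ ω, ENNReal.ofReal (c ω) ∂π = ∞ := by
    contrapose! hcπ
    exact (lintegral_ofReal_ne_top_iff_integrable hc.aestronglyMeasurable (ae_of_all _ hc₀)).1 hcπ
  rw [entropicCost, hcost, top_add]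

lemma entropicCost_eq_top_of_klDiv_eq_top {ε : ℝ} (hε : 0 < ε) {ρ π : Measure Ω}
    (hkl : klDiv π ρ = ∞) (c : Ω → ℝ) : entropicCost c ε ρ π = ∞ := by
  rw [entropicCost, hkl, ENNReal.mul_top (ENNReal.ofReal_pos.2 hε).ne', add_top]

lemma entropicCost_eq_ofReal {c : Ω → ℝ} (hc₀ : 0 ≤ c) {ε : ℝ} (hε : 0 ≤ ε) {ρ π : Measure Ω}
    (hcπ : Integrable c π) (hkl : klDiv π ρ ≠ ∞) :
    entropicCost c ε ρ π =
      ENNReal.ofReal (∫ ω, c ω ∂π + ε * (klDiv π ρ).toReal) := by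
  rw [entropicCost, ← ofReal_integral_eq_lintegral_ofReal hcπ (ae_of_all _ hc₀),
    ENNReal.ofReal_add (integral_nonneg hc₀) (by positivity), ENNReal.ofReal_mul hε,
    ENNReal.ofReal_toReal hkl]

lemma tilted_eq_withDensity_exp {ρ : Measure Ω} {f : Ω → ℝ} (hf : AEMeasurable f ρ)
    [IsProbabilityMeasure (ρ.withDensity fun ω => ENNReal.ofReal (Real.exp (f ω)))] :
    ρ.tilted f = ρ.withDensity fun ω => ENNReal.ofReal (Real.exp (f ω)) := by
  have hZ : ∫ ω, Real.exp (f ω) ∂ρ = 1 := by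
    rw [integral_eq_lintegral_of_nonneg_ae (ae_of_all _ fun ω => (Real.exp_pos _).le)
        hf.exp.aestronglyMeasurable, ← setLIntegral_univ, ← withDensity_apply _ MeasurableSet.univ,
      measure_univ, ENNReal.toReal_one]
  simp only [Measure.tilted, hZ, div_one]

lemma integrable_exp_of_neZero_tilted {ρ : Measure Ω} {f : Ω → ℝ} [NeZero (ρ.tilted f)] :
    Integrable (fun ω => Real.exp (f ω)) ρ :=
  not_not.1 fun h => NeZero.ne (ρ.tilted f) (tilted_of_not_integrable h)

lemma llr_tilted_self_ae_eq {ρ : Measure Ω} [SigmaFinite ρ] {f : Ω → ℝ}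
    (hexp : Integrable (fun ω => Real.exp (f ω)) ρ) :
    llr (ρ.tilted f) ρ =ᵐ[ρ.tilted f] fun ω => f ω - Real.log (∫ ω, Real.exp (f ω) ∂ρ) :=
  (tilted_absolutelyContinuous ρ f).ae_eq (log_rnDeriv_tilted_left_self hexp)

variable {ρ : Measure Ω} [IsProbabilityMeasure ρ] {f : Ω → ℝ}

lemma integral_sub_log_integral_exp_le_toReal_klDiv {π : Measure Ω} [IsProbabilityMeasure π]
    (hkl : klDiv π ρ ≠ ∞) (hexp : Integrable (fun ω => Real.exp (f ω)) ρ)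
    (hf : Integrable f π) :
    ∫ ω, f ω ∂π - Real.log (∫ ω, Real.exp (f ω) ∂ρ) ≤ (klDiv π ρ).toReal := by
  obtain ⟨hac, hllr⟩ := klDiv_ne_top_iff.1 hkl
  have : IsProbabilityMeasure (ρ.tilted f) := isProbabilityMeasure_tilted hexp
  have hklf := toReal_klDiv_of_measure_eq
    (hac.trans (absolutelyContinuous_tilted hexp)) (by simp only [measure_univ])
  rw [integral_llr_tilted_right hac hf hexp hllr,
    ← toReal_klDiv_of_measure_eq hac (by simp only [measure_univ])] at hklf
  linarith [(klDiv π (ρ.tilted f)).toReal_nonneg]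

lemma klDiv_tilted_ne_top (hexp : Integrable (fun ω => Real.exp (f ω)) ρ)
    (hf : Integrable f (ρ.tilted f)) : klDiv (ρ.tilted f) ρ ≠ ∞ := by
  have : IsProbabilityMeasure (ρ.tilted f) := isProbabilityMeasure_tilted hexp
  exact klDiv_ne_top (tilted_absolutelyContinuous ρ f)
    ((hf.sub (integrable_const _)).congr (llr_tilted_self_ae_eq hexp).symm)

lemma toReal_klDiv_tilted (hexp : Integrable (fun ω => Real.exp (f ω)) ρ)
    (hf : Integrable f (ρ.tilted f)) :
    (klDiv (ρ.tilted f) ρ).toReal =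
      ∫ ω, f ω ∂(ρ.tilted f) - Real.log (∫ ω, Real.exp (f ω) ∂ρ) := by
  have : IsProbabilityMeasure (ρ.tilted f) := isProbabilityMeasure_tilted hexp
  rw [toReal_klDiv_of_measure_eq (tilted_absolutelyContinuous ρ f)
      (by simp only [measure_univ]), integral_congr_ae (llr_tilted_self_ae_eq hexp),
    integral_sub hf (integrable_const _), integral_const, probReal_univ, one_smul]

theorem entropicCost_tilted_le {c g : Ω → ℝ} {ε : ℝ} {π : Measure Ω} [IsProbabilityMeasure π]
    (hc₀ : 0 ≤ c) (hε : 0 < ε) (hexp : Integrable (fun ω => Real.exp ((g ω - c ω) / ε)) ρ)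
    (hcπ : Integrable c π) (hgπ : Integrable g π)
    (hct : Integrable c (ρ.tilted fun ω => (g ω - c ω) / ε))
    (hgt : Integrable g (ρ.tilted fun ω => (g ω - c ω) / ε))
    (hg : ∫ ω, g ω ∂π = ∫ ω, g ω ∂(ρ.tilted fun ω => (g ω - c ω) / ε)) :
    entropicCost c ε ρ (ρ.tilted fun ω => (g ω - c ω) / ε) ≤ entropicCost c ε ρ π := by
  by_cases hkl : klDiv π ρ = ∞
  · exact (entropicCost_eq_top_of_klDiv_eq_top hε hkl c).symm ▸ le_top
  have hft := (hgt.sub hct).div_const ε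
  have hgibbs := integral_sub_log_integral_exp_le_toReal_klDiv hkl hexp ((hgπ.sub hcπ).div_const ε)
  have hattained := toReal_klDiv_tilted hexp hft
  rw [integral_div, integral_sub hgπ hcπ] at hgibbs
  rw [integral_div, integral_sub hgt hct] at hattained
  rw [entropicCost_eq_ofReal hc₀ hε.le hct (klDiv_tilted_ne_top hexp hft),
    entropicCost_eq_ofReal hc₀ hε.le hcπ hkl, hattained, ← hg]
  refine ENNReal.ofReal_le_ofReal ?_
  calc _ = ∫ ω, c ω ∂π + ε * ((∫ ω, g ω ∂π - ∫ ω, c ω ∂π) / ε -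
        Real.log (∫ ω, Real.exp ((g ω - c ω) / ε) ∂ρ)) := by field_simp; ring
    _ ≤ _ := by gcongr

end GibbsVariationalPrinciple

section SchrodingerPotentials

variable {X Y : Type*} [MeasurableSpace X] [MeasurableSpace Y] {μ : Measure X} {ν : Measure Y}
  {π : Measure (X × Y)} {a : X → ℝ} {b : Y → ℝ}

lemma isProbabilityMeasure_of_fst_eq [IsProbabilityMeasure μ] (hfst : π.fst = μ) :
    IsProbabilityMeasure π :=
  ⟨by rw [← Measure.fst_univ, hfst, measure_univ]⟩

lemma integrable_add_of_fst_eq_of_snd_eq (hfst : π.fst = μ) (hsnd : π.snd = ν)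
    (ha : Integrable a μ) (hb : Integrable b ν) : Integrable (fun z => a z.1 + b z.2) π := by
  subst hfst hsnd
  exact (ha.comp_measurable measurable_fst).add (hb.comp_measurable measurable_snd)

lemma integral_add_of_fst_eq_of_snd_eq (hfst : π.fst = μ) (hsnd : π.snd = ν)
    (ha : Integrable a μ) (hb : Integrable b ν) :
    ∫ z, (a z.1 + b z.2) ∂π = ∫ x, a x ∂μ + ∫ y, b y ∂ν := by
  subst hfst hsnd
  rw [Measure.fst, Measure.snd, integral_map measurable_fst.aemeasurable ha.aestronglyMeasurable,
    integral_map measurable_snd.aemeasurable hb.aestronglyMeasurable]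
  exact integral_add (ha.comp_measurable measurable_fst) (hb.comp_measurable measurable_snd)

theorem entropicCost_tilted_le_of_fst_eq_of_snd_eq [IsProbabilityMeasure μ]
    {ρ : Measure (X × Y)} [IsProbabilityMeasure ρ] {c : X × Y → ℝ} {ε : ℝ}
    (hc₀ : 0 ≤ c) (hε : 0 < ε) (ha : Integrable a μ) (hb : Integrable b ν)
    (hct : Integrable c (ρ.tilted fun z => (a z.1 + b z.2 - c z) / ε))
    (hfstt : (ρ.tilted fun z => (a z.1 + b z.2 - c z) / ε).fst = μ)
    (hsndt : (ρ.tilted fun z => (a z.1 + b z.2 - c z) / ε).snd = ν)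
    (hcπ : Integrable c π) (hfst : π.fst = μ) (hsnd : π.snd = ν) :
    entropicCost c ε ρ (ρ.tilted fun z => (a z.1 + b z.2 - c z) / ε) ≤ entropicCost c ε ρ π := by
  have := isProbabilityMeasure_of_fst_eq hfst
  have := isProbabilityMeasure_of_fst_eq hfstt
  refine entropicCost_tilted_le hc₀ hε integrable_exp_of_neZero_tilted
    hcπ (integrable_add_of_fst_eq_of_snd_eq hfst hsnd ha hb)
    hct (integrable_add_of_fst_eq_of_snd_eq hfstt hsndt ha hb) ?_
  rw [integral_add_of_fst_eq_of_snd_eq hfst hsnd ha hb,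
    integral_add_of_fst_eq_of_snd_eq hfstt hsndt ha hb]

end SchrodingerPotentials

section ProductsAndSymmetry

variable {X Y : Type*} [MeasurableSpace X] [MeasurableSpace Y]

lemma withDensity_prod_dirac (M : Measure X) [SFinite M] {h : X × Y → ℝ≥0∞} (hh : Measurable h)
    (y : Y) : (M.prod (Measure.dirac y)).withDensity h =
      (M.withDensity fun x => h (x, y)).prod (Measure.dirac y) := by
  ext s hs
  rw [withDensity_apply _ hs, Measure.prod_dirac, Measure.prod_dirac,
    setLIntegral_map hs hh measurable_prodMk_right, Measure.map_apply measurable_prodMk_right hs,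
    withDensity_apply _ (measurable_prodMk_right hs)]

lemma isNegInvariant_withDensity {G : Type*} [MeasurableSpace G] [InvolutiveNeg G]
    [MeasurableNeg G] (M : Measure G) [M.IsNegInvariant] {h : G → ℝ≥0∞}
    (hh : ∀ x, h (-x) = h x) : (M.withDensity h).IsNegInvariant := by
  refine ⟨Measure.ext fun s hs => ?_⟩
  have hneg := (Measure.measurePreserving_neg M).setLIntegral_comp_preimage_emb
    measurableEmbedding_neg h s
  rw [Measure.neg, Measure.map_apply measurable_neg hs, withDensity_apply _ (measurable_neg hs),
    withDensity_apply _ hs, ← hneg]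
  simp only [hh]

lemma memLp_fst_iff_integrable_sq_sub {π : Measure (ℝ × ℝ)} (hsnd : MemLp id 2 π.snd) :
    MemLp id 2 π.fst ↔ Integrable (fun z => (z.1 - z.2) ^ 2) π := by
  have hsnd' : MemLp (fun z => z.2) 2 π := hsnd.comp_of_map measurable_snd.aemeasurable
  rw [Measure.fst, memLp_map_measure_iff aestronglyMeasurable_id measurable_fst.aemeasurable,
    ← memLp_two_iff_integrable_sq (by fun_prop)]
  refine ⟨fun hfst => hfst.sub hsnd', fun hsub => ?_⟩
  simpa [Function.comp_def, Pi.add_def] using MemLp.add hsub hsnd'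

end ProductsAndSymmetry

instance isProbabilityMeasure_nuHalf : IsProbabilityMeasure nuHalf :=
  ⟨by simp [nuHalf, ENNReal.inv_two_add_inv_two]⟩

lemma memLp_id_nuHalf : MemLp id 2 nuHalf := by
  refine MemLp.of_bound aestronglyMeasurable_id 1 ?_
  simp [nuHalf, ae_add_measure_iff, ae_dirac_eq]

lemma KLdiv_eq_klDiv {π ρ : Measure (ℝ × ℝ)} (h : π Set.univ = ρ Set.univ) :
    KLdiv π ρ = klDiv π ρ := by
  simp [KLdiv, klDiv, Measure.real, h]

/-- Normalizing factor of the conditional law of `y ∈ {−1, 1}` given `x` under `π_η`. -/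
noncomputable def partitionFn (η x : ℝ) : ℝ :=
  Real.exp (-(η * (x - 1) ^ 2)) + Real.exp (-(η * (x + 1) ^ 2))

/-- Conditional probability of `y ∈ {−1, 1}` given `x` under `π_η`. -/
noncomputable def gibbsWeight (η y x : ℝ) : ℝ :=
  Real.exp (-(η * (x - y) ^ 2)) / partitionFn η x

/-- The analogue of `piEta` for an arbitrary first marginal `M` on `ℝ`, which need not have a
density. -/
noncomputable def gibbsCoupling (M : Measure ℝ) (η : ℝ) : Measure (ℝ × ℝ) :=
  (M.withDensity fun x => ENNReal.ofReal (gibbsWeight η 1 x)).prod (Measure.dirac 1) +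
  (M.withDensity fun x => ENNReal.ofReal (gibbsWeight η (-1) x)).prod (Measure.dirac (-1))

lemma partitionFn_pos (η x : ℝ) : 0 < partitionFn η x := by
  unfold partitionFn
  positivity

@[fun_prop]
lemma measurable_partitionFn (η : ℝ) : Measurable (partitionFn η) := by
  unfold partitionFn
  fun_prop

@[fun_prop]
lemma measurable_gibbsWeight (η : ℝ) {Ω : Type*} [MeasurableSpace Ω] {f g : Ω → ℝ}
    (hf : Measurable f) (hg : Measurable g) : Measurable fun ω => gibbsWeight η (f ω) (g ω) := by
  unfold gibbsWeight
  fun_prop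

lemma gibbsWeight_nonneg (η y x : ℝ) : 0 ≤ gibbsWeight η y x :=
  div_nonneg (Real.exp_pos _).le (partitionFn_pos η x).le

lemma gibbsWeight_one_add_gibbsWeight_neg_one (η x : ℝ) :
    gibbsWeight η 1 x + gibbsWeight η (-1) x = 1 := by
  rw [gibbsWeight, gibbsWeight, sub_neg_eq_add, ← add_div]
  exact div_self (partitionFn_pos η x).ne'

lemma ofReal_gibbsWeight_one_add_neg_one (η x : ℝ) :
    ENNReal.ofReal (gibbsWeight η 1 x) + ENNReal.ofReal (gibbsWeight η (-1) x) = 1 := by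
  rw [← ENNReal.ofReal_add (gibbsWeight_nonneg η 1 x) (gibbsWeight_nonneg η (-1) x),
    gibbsWeight_one_add_gibbsWeight_neg_one, ENNReal.ofReal_one]

lemma gibbsWeight_neg_neg (η y x : ℝ) : gibbsWeight η (-y) (-x) = gibbsWeight η y x := by
  have hpartition : partitionFn η (-x) = partitionFn η x := by
    rw [partitionFn, partitionFn, add_comm]
    ring_nf
  rw [gibbsWeight, gibbsWeight, hpartition]
  ring_nf

lemma integrable_log_partitionFn {M : Measure ℝ} [IsFiniteMeasure M] {η : ℝ} (hη : 0 ≤ η)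
    (hM : MemLp id 2 M) : Integrable (fun x => Real.log (partitionFn η x)) M := by
  have hsq : Integrable (fun x : ℝ => (x - 1) ^ 2) M := (hM.sub (memLp_const 1)).integrable_sq
  refine integrable_of_le_of_le (measurable_partitionFn η).log.aestronglyMeasurable
    (ae_of_all _ fun x => ?_) (ae_of_all _ fun x => ?_) (hsq.const_mul η).neg
    (integrable_const (Real.log 2))
  · refine (Real.le_log_iff_exp_le (partitionFn_pos η x)).2 ?_
    exact le_add_of_nonneg_right (Real.exp_pos _).le
  · refine Real.log_le_log (partitionFn_pos η x) ?_
    have hexp_le_one (y : ℝ) : Real.exp (-(η * y ^ 2)) ≤ 1 :=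
      Real.exp_le_one_iff.2 (neg_nonpos.2 (by positivity))
    unfold partitionFn
    linarith [hexp_le_one (x - 1), hexp_le_one (x + 1)]

/-- Schrödinger potential in `x` of the coupling `gibbsCoupling M η`; the potential in `y`
vanishes. -/
noncomputable def gibbsPotential (η x : ℝ) : ℝ :=
  (Real.log 2 - Real.log (partitionFn η x)) / η

lemma exp_gibbsPotential_sub_cost {η : ℝ} (hη : η ≠ 0) (x y : ℝ) :
    Real.exp ((gibbsPotential η x - (x - y) ^ 2) / (1 / η)) = 2 * gibbsWeight η y x := by
  have hexponent : (gibbsPotential η x - (x - y) ^ 2) / (1 / η) =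
      Real.log 2 + -(η * (x - y) ^ 2) - Real.log (partitionFn η x) := by
    rw [gibbsPotential]
    field_simp
    ring
  rw [hexponent, Real.exp_sub, Real.exp_add, Real.exp_log two_pos,
    Real.exp_log (partitionFn_pos η x), gibbsWeight, mul_div_assoc]

lemma piEta_eq_gibbsCoupling {μ : ℝ → ℝ} (hmeas : Measurable μ) (hnn : ∀ x, 0 ≤ μ x) (η : ℝ) :
    piEta μ η = gibbsCoupling (volume.withDensity fun x => ENNReal.ofReal (μ x)) η := by
  rw [piEta, gibbsCoupling, ← withDensity_mul _ (by fun_prop) (by fun_prop),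
    ← withDensity_mul _ (by fun_prop) (by fun_prop), Measure.prod_dirac, Measure.prod_dirac]
  simp only [Pi.mul_def, gibbsWeight, partitionFn, ← ENNReal.ofReal_mul (hnn _), mul_div_assoc,
    sub_neg_eq_add]

section GibbsCoupling

variable (M : Measure ℝ) (η : ℝ)

lemma gibbsCoupling_fst : (gibbsCoupling M η).fst = M := by
  rw [gibbsCoupling, Measure.fst_add, Measure.fst_prod, Measure.fst_prod,
    ← withDensity_add_left (by fun_prop)]
  simp only [Pi.add_def, ofReal_gibbsWeight_one_add_neg_one, withDensity_const, one_smul]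

instance isProbabilityMeasure_gibbsCoupling [IsProbabilityMeasure M] :
    IsProbabilityMeasure (gibbsCoupling M η) :=
  isProbabilityMeasure_of_fst_eq (gibbsCoupling_fst M η)

lemma lintegral_gibbsWeight_neg [M.IsNegInvariant] (y : ℝ) :
    ∫⁻ x, ENNReal.ofReal (gibbsWeight η (-y) x) ∂M =
      ∫⁻ x, ENNReal.ofReal (gibbsWeight η y x) ∂M := by
  rw [← lintegral_neg_eq_self]
  simp only [gibbsWeight_neg_neg]

lemma lintegral_gibbsWeight_one [IsProbabilityMeasure M] [M.IsNegInvariant] :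
    ∫⁻ x, ENNReal.ofReal (gibbsWeight η 1 x) ∂M = 2⁻¹ := by
  refine ENNReal.eq_inv_of_mul_eq_one_left ?_
  calc (∫⁻ x, ENNReal.ofReal (gibbsWeight η 1 x) ∂M) * 2
    _ = ∫⁻ x, ENNReal.ofReal (gibbsWeight η 1 x) ∂M +
          ∫⁻ x, ENNReal.ofReal (gibbsWeight η (-1) x) ∂M := by
      rw [mul_two, lintegral_gibbsWeight_neg]
    _ = 1 := by
      rw [← lintegral_add_left (by fun_prop)]
      simp only [ofReal_gibbsWeight_one_add_neg_one, lintegral_one, measure_univ]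

lemma gibbsCoupling_snd [IsProbabilityMeasure M] [M.IsNegInvariant] :
    (gibbsCoupling M η).snd = nuHalf := by
  rw [gibbsCoupling, Measure.snd_add, Measure.snd, Measure.snd, Measure.map_snd_prod,
    Measure.map_snd_prod, withDensity_apply _ MeasurableSet.univ,
    withDensity_apply _ MeasurableSet.univ, setLIntegral_univ, setLIntegral_univ,
    lintegral_gibbsWeight_neg, lintegral_gibbsWeight_one, nuHalf, one_div, add_comm]

lemma gibbsCoupling_eq_withDensity [SFinite M] :
    gibbsCoupling M η = (M.prod nuHalf).withDensity
      fun z => 2 * ENNReal.ofReal (gibbsWeight η z.2 z.1) := by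
  have hatom (y : ℝ) : ((2⁻¹ : ℝ≥0∞) • M.prod (Measure.dirac y)).withDensity
        (fun z => 2 * ENNReal.ofReal (gibbsWeight η z.2 z.1)) =
      (M.withDensity fun x => ENNReal.ofReal (gibbsWeight η y x)).prod (Measure.dirac y) := by
    rw [withDensity_smul_measure, withDensity_prod_dirac M (by fun_prop)]
    change _ • (M.withDensity ((2 : ℝ≥0∞) • fun x => ENNReal.ofReal (gibbsWeight η y x))).prod _ = _
    rw [withDensity_smul _ (by fun_prop), Measure.prod_smul_left, smul_smul,
      ENNReal.inv_mul_cancel two_ne_zero ofNat_ne_top, one_smul]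
  rw [nuHalf, one_div, Measure.prod_add, Measure.prod_smul_right, Measure.prod_smul_right,
    withDensity_add_measure, hatom, hatom, gibbsCoupling, add_comm]

lemma gibbsCoupling_eq_tilted [IsProbabilityMeasure M] {η : ℝ} (hη : η ≠ 0) :
    gibbsCoupling M η = (M.prod nuHalf).tilted
      fun z => (gibbsPotential η z.1 + 0 - (z.1 - z.2) ^ 2) / (1 / η) := by
  have hdensity : gibbsCoupling M η = (M.prod nuHalf).withDensity fun z =>
      ENNReal.ofReal (Real.exp ((gibbsPotential η z.1 + 0 - (z.1 - z.2) ^ 2) / (1 / η))) := by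
    simp only [add_zero, exp_gibbsPotential_sub_cost hη, ENNReal.ofReal_mul zero_le_two,
      ENNReal.ofReal_ofNat, gibbsCoupling_eq_withDensity]
  have hprob : IsProbabilityMeasure (gibbsCoupling M η) := inferInstance
  rw [hdensity] at hprob
  rw [hdensity, tilted_eq_withDensity_exp]
  unfold gibbsPotential
  fun_prop

lemma entropicCost_gibbsCoupling_le [IsProbabilityMeasure M] [M.IsNegInvariant] {η : ℝ}
    (hη : 0 < η) {π : Measure (ℝ × ℝ)} (hfst : π.fst = M) (hsnd : π.snd = nuHalf) :
    entropicCost (fun z => (z.1 - z.2) ^ 2) (1 / η) (M.prod nuHalf) (gibbsCoupling M η) ≤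
      entropicCost (fun z => (z.1 - z.2) ^ 2) (1 / η) (M.prod nuHalf) π := by
  have hc₀ : 0 ≤ fun z : ℝ × ℝ => (z.1 - z.2) ^ 2 := fun z => sq_nonneg _
  by_cases hcπ : Integrable (fun z : ℝ × ℝ => (z.1 - z.2) ^ 2) π
  · have hM : MemLp id 2 M :=
      hfst ▸ (memLp_fst_iff_integrable_sq_sub (hsnd ▸ memLp_id_nuHalf)).2 hcπ
    have hfstt := gibbsCoupling_fst M η
    have hsndt := gibbsCoupling_snd M η
    have hct := (memLp_fst_iff_integrable_sq_sub (hsndt ▸ memLp_id_nuHalf)).1 (hfstt.symm ▸ hM)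
    have hpotential : Integrable (gibbsPotential η) M :=
      ((integrable_const _).sub (integrable_log_partitionFn hη.le hM)).div_const η
    rw [gibbsCoupling_eq_tilted M hη.ne'] at hfstt hsndt hct ⊢
    exact entropicCost_tilted_le_of_fst_eq_of_snd_eq (a := gibbsPotential η) (b := fun _ => 0)
      (c := fun z => (z.1 - z.2) ^ 2) hc₀ (one_div_pos.2 hη) hpotential (integrable_const 0) hct
      hfstt hsndt hcπ hfst hsnd
  · exact (entropicCost_eq_top_of_not_integrable (by fun_prop) hc₀ hcπ _ _).symm ▸ le_top

end GibbsCoupling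

theorem piEta_isOptimal_entropic_general (M : Measure ℝ) [IsProbabilityMeasure M]
    [M.IsNegInvariant] (η : ℝ) (hη : 0 < η) :
    (gibbsCoupling M η).fst = M ∧ (gibbsCoupling M η).snd = nuHalf ∧
    ∀ π : Measure (ℝ × ℝ), π.fst = M → π.snd = nuHalf →
      (∫⁻ z, ENNReal.ofReal ((z.1 - z.2) ^ 2) ∂(gibbsCoupling M η)) +
          ENNReal.ofReal (1 / η) * KLdiv (gibbsCoupling M η) (M.prod nuHalf) ≤
        (∫⁻ z, ENNReal.ofReal ((z.1 - z.2) ^ 2) ∂π) +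
          ENNReal.ofReal (1 / η) * KLdiv π (M.prod nuHalf) := by
  refine ⟨gibbsCoupling_fst M η, gibbsCoupling_snd M η, fun π hfst hsnd => ?_⟩
  have := isProbabilityMeasure_of_fst_eq hfst
  rw [KLdiv_eq_klDiv (by simp only [measure_univ]), KLdiv_eq_klDiv (by simp only [measure_univ])]
  exact entropicCost_gibbsCoupling_le M hη hfst hsnd

theorem piEta_isOptimal_entropic (μ : ℝ → ℝ)
    (hmeas : Measurable μ) (hnn : ∀ x, 0 ≤ μ x) (heven : ∀ x, μ x = μ (-x))
    (hprob : IsProbabilityMeasure (volume.withDensity fun x => ENNReal.ofReal (μ x)))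
    (hmom2 : Integrable (fun x => x ^ 2 * μ x))
    (η : ℝ) (hη : 0 < η) :
    (piEta μ η).fst = (volume.withDensity fun x => ENNReal.ofReal (μ x)) ∧
    (piEta μ η).snd = nuHalf ∧
    ∀ π : Measure (ℝ × ℝ), IsProbabilityMeasure π →
      π.fst = (volume.withDensity fun x => ENNReal.ofReal (μ x)) →
      π.snd = nuHalf →
      (∫⁻ z, ENNReal.ofReal ((z.1 - z.2) ^ 2) ∂(piEta μ η)) +
          ENNReal.ofReal (1 / η) *
            KLdiv (piEta μ η)
              ((volume.withDensity fun x => ENNReal.ofReal (μ x)).prod nuHalf) ≤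
        (∫⁻ z, ENNReal.ofReal ((z.1 - z.2) ^ 2) ∂π) +
          ENNReal.ofReal (1 / η) *
            KLdiv π ((volume.withDensity fun x => ENNReal.ofReal (μ x)).prod nuHalf) := by
  rw [piEta_eq_gibbsCoupling hmeas hnn]
  have := isNegInvariant_withDensity volume
    (h := fun x => ENNReal.ofReal (μ x)) fun x => by rw [← heven x]
  have hopt := piEta_isOptimal_entropic_general
    (volume.withDensity fun x => ENNReal.ofReal (μ x)) η hη
  exact ⟨hopt.1, hopt.2.1, fun π _ => hopt.2.2 π⟩
end
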